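/- Let k ≥ 2 and n ≥ 1, and let G be a finite simple graph on n vertices that contains no cycle of length at most k and no even cycle of length at most 2k. Then the number of edges of G satisfies e(G) ≤ (1/2)·n^{1+1/k} + ((k−1)/(2k))·n + n^{1−1/k}. -/

import Mathlib

open Set

/-- Every cycle of `G` is longer than `k`, and every even cycle is longer than `2 * k`. -/
def SimpleGraph.CycleSparse {V : Type*} (G : SimpleGraph V) (k : ℕ) : Prop :=
  ∀ (v : V) (c : G.Walk v v), c.IsCycle → k < c.length ∧ (Even c.length → 2 * k < c.length)

namespace SimpleGraph

variable {V : Type*} {G : SimpleGraph V} {k : ℕ}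

theorem CycleSparse.induce (hG : G.CycleSparse k) (s : Set V) : (G.induce s).CycleSparse k := by
  intro v c hc
  have := hG _ _ (hc.map (f := (Embedding.induce (G := G) s).toHom) Subtype.val_injective)
  rwa [Walk.length_map] at this

theorem CycleSparse.isPath_unique (hG : G.CycleSparse k) {u v : V} {p q : G.Walk u v}
    (hp : p.IsPath) (hq : q.IsPath) (hpq : p.length = q.length) (hk : p.length ≤ k) : p = q := by
  classical
  induction hs : p.length using Nat.strongRec generalizing u v with | ind s ih =>
  by_contra hne
  by_cases! hw : ∃ w, w ∈ p.support ∧ w ∈ q.support ∧ w ≠ u ∧ w ≠ v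
  · obtain ⟨w, hwp, hwq, hwu, hwv⟩ := hw
    have hlp := congrArg Walk.length (p.take_spec hwp)
    have hlq := congrArg Walk.length (q.take_spec hwq)
    rw [Walk.length_append] at hlp hlq
    have h1 := Walk.length_takeUntil_lt_length hwp hwv
    have h2 := Walk.length_dropUntil_lt_length hwp hwu
    by_cases htake : p.takeUntil w hwp = q.takeUntil w hwq
    · have hl := congrArg Walk.length htake
      have hdrop := ih _ (hs ▸ h2) (hp.dropUntil hwp) (hq.dropUntil hwq) (by lia) (by lia) rfl
      exact hne (by rw [← p.take_spec hwp, ← q.take_spec hwq, htake, hdrop])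
    by_cases hdrop : p.dropUntil w hwp = q.dropUntil w hwq
    · have hl := congrArg Walk.length hdrop
      exact htake (ih _ (hs ▸ h1) (hp.takeUntil hwp) (hq.takeUntil hwq) (by lia) (by lia) rfl)
    obtain ⟨_, _, _, c, hc, hcl⟩ :=
      (hp.takeUntil hwp).exists_isCycle_length_le_add_of_ne (hq.takeUntil hwq) htake
    obtain ⟨_, _, _, c', hc', hcl'⟩ :=
      (hp.dropUntil hwp).exists_isCycle_length_le_add_of_ne (hq.dropUntil hwq) hdrop
    have := (hG _ c hc).1
    have := (hG _ c' hc').1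
    lia
  · have hc : (p.append q.reverse).IsCycle := by
      refine hp.isCycle_append (Walk.isPath_reverse_iff q |>.mpr hq) (fun _ ↦ ?_) ?_
      · grind [Walk.dropLast_support_concat, Walk.IsPath.support_nodup, Walk.support_reverse,
          Walk.cons_tail_support]
      · grind [Walk.length_reverse, Walk.eq_of_length_le_one]
    have hl : (p.append q.reverse).length = p.length + p.length := by simp [hpq]
    have := (hG _ _ hc).2 (hl ▸ ⟨_, rfl⟩)
    lia

theorem CycleSparse.isPath_cons (hG : G.CycleSparse k) {u x v : V} {p : G.Walk x v}
    (hp : p.IsPath) (h : G.Adj u x) (hu : p.snd ≠ u) (hk : p.length + 1 ≤ k) :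
    (Walk.cons h p).IsPath := by
  classical
  refine (Walk.cons_isPath_iff h p).2 ⟨hp, fun hup ↦ ?_⟩
  have hc : (Walk.cons h (p.takeUntil u hup)).IsCycle := by
    refine (Walk.cons_isCycle_iff _ h).2 ⟨hp.takeUntil hup, fun he ↦ hu ?_⟩
    refine (hp.eq_snd_of_mem_edges (w := u) ?_).symm
    rw [Sym2.eq_swap]
    exact p.edges_takeUntil_subset_edges hup he
  have h1 := (hG _ _ hc).1
  have h2 := p.length_takeUntil_le_length hup
  rw [Walk.length_cons] at h1
  lia

variable [Fintype V]

open Classical in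
/-- The final vertices of the paths of length `j` whose first two vertices are `u` and `x`. -/
noncomputable def pathEnds (G : SimpleGraph V) (j : ℕ) (u x : V) : Finset V :=
  Finset.univ.filter fun v ↦ ∃ p : G.Walk u v, p.IsPath ∧ p.length = j ∧ p.snd = x

theorem mem_pathEnds {j : ℕ} {u x v : V} :
    v ∈ G.pathEnds j u x ↔ ∃ p : G.Walk u v, p.IsPath ∧ p.length = j ∧ p.snd = x := by
  simp [pathEnds]

theorem CycleSparse.disjoint_pathEnds (hG : G.CycleSparse k) {j : ℕ} (hj : j ≤ k) {u x y : V}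
    (hxy : x ≠ y) : Disjoint (G.pathEnds j u x) (G.pathEnds j u y) := by
  refine Finset.disjoint_left.2 fun v hx hy ↦ ?_
  obtain ⟨p, hp, hpl, rfl⟩ := mem_pathEnds.1 hx
  obtain ⟨q, hq, hql, rfl⟩ := mem_pathEnds.1 hy
  exact hxy (by rw [hG.isPath_unique hp hq (by lia) (by lia)])

theorem mem_pathEnds_one {u x : V} (h : G.Adj u x) : x ∈ G.pathEnds 1 u x :=
  mem_pathEnds.2 ⟨h.toWalk, by simp [h.ne], by simp, by simp⟩

theorem CycleSparse.pathEnds_subset (hG : G.CycleSparse k) {j : ℕ} (hj : j + 1 ≤ k) {u x y : V}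
    (h : G.Adj u x) (hy : y ≠ u) : G.pathEnds j x y ⊆ G.pathEnds (j + 1) u x := by
  intro v hv
  obtain ⟨p, hp, hpl, rfl⟩ := mem_pathEnds.1 hv
  exact mem_pathEnds.2 ⟨.cons h p, hG.isPath_cons hp h hy (by lia), by simp [hpl], by simp⟩

theorem CycleSparse.sum_card_pathEnds_le [DecidableEq V] [DecidableRel G.Adj]
    (hG : G.CycleSparse k) {j : ℕ} (hj : j + 1 ≤ k) {u x : V} (h : G.Adj u x) :
    ∑ y ∈ (G.neighborFinset x).erase u, (G.pathEnds j x y).card ≤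
      (G.pathEnds (j + 1) u x).card := by
  rw [← Finset.card_biUnion fun y _ z _ hyz ↦ hG.disjoint_pathEnds (by lia) hyz]
  refine Finset.card_le_card (Finset.biUnion_subset.2 fun y hy ↦ ?_)
  exact hG.pathEnds_subset hj h (Finset.ne_of_mem_erase hy)

theorem CycleSparse.sum_sum_card_pathEnds_le [DecidableRel G.Adj] (hG : G.CycleSparse k) :
    ∑ u, ∑ x ∈ G.neighborFinset u, (G.pathEnds k u x).card ≤ Fintype.card V ^ 2 := by
  classical
  calc _ ≤ ∑ _u : V, Fintype.card V := by
        refine Finset.sum_le_sum fun u _ ↦ ?_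
        rw [← Finset.card_biUnion fun y _ z _ hyz ↦ hG.disjoint_pathEnds le_rfl hyz]
        exact Finset.card_le_univ _
    _ = _ := by simp [sq]

theorem sum_sum_neighborFinset_comm [DecidableRel G.Adj] (f : V → V → ℝ) :
    ∑ u, ∑ x ∈ G.neighborFinset u, f u x = ∑ x, ∑ u ∈ G.neighborFinset x, f u x :=
  Finset.sum_comm' fun u x ↦ by simp [G.adj_comm]

theorem sum_sum_sum_erase_neighborFinset [DecidableEq V] [DecidableRel G.Adj]
    (hdeg : ∀ v, 2 ≤ G.degree v) (f : V → V → ℝ) :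
    ∑ u, ∑ x ∈ G.neighborFinset u,
      (((G.neighborFinset x).erase u).card : ℝ)⁻¹ * ∑ y ∈ (G.neighborFinset x).erase u, f x y =
    ∑ x, ∑ y ∈ G.neighborFinset x, f x y := by
  rw [sum_sum_neighborFinset_comm]
  refine Finset.sum_congr rfl fun x _ ↦ ?_
  have hcard : ∀ u ∈ G.neighborFinset x,
      (((G.neighborFinset x).erase u).card : ℝ) = G.degree x - 1 := fun u hu ↦ by
    rw [Finset.card_erase_of_mem hu, card_neighborFinset_eq_degree,
      Nat.cast_sub (by have := hdeg x; lia), Nat.cast_one]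
  have hpos : (G.degree x : ℝ) - 1 ≠ 0 := by
    have : (2 : ℝ) ≤ G.degree x := mod_cast hdeg x
    linarith
  rw [Finset.sum_congr rfl fun u hu ↦ by rw [hcard u hu], ← Finset.mul_sum,
    Finset.sum_comm' (t' := G.neighborFinset x) (s' := fun y ↦ (G.neighborFinset x).erase y)
      (by intro u y; simp only [Finset.mem_erase]; tauto)]
  rw [Finset.mul_sum]
  refine Finset.sum_congr rfl fun y hy ↦ ?_
  rw [Finset.sum_const, nsmul_eq_mul, hcard y hy, inv_mul_cancel_left₀ hpos]

end SimpleGraph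

/-- Logarithmic form of the inequality of arithmetic and geometric means. -/
theorem log_card_add_le_log_sum {ι : Type*} {s : Finset ι} (hs : s.Nonempty) {f : ι → ℝ}
    (hf : ∀ i ∈ s, 0 < f i) :
    Real.log s.card + (s.card : ℝ)⁻¹ * ∑ i ∈ s, Real.log (f i) ≤ Real.log (∑ i ∈ s, f i) := by
  have hc : (0 : ℝ) < s.card := mod_cast hs.card_pos
  have h := strictConcaveOn_log_Ioi.concaveOn.le_map_sum (t := s) (w := fun _ ↦ (s.card : ℝ)⁻¹)
    (p := f) (fun _ _ ↦ by positivity) (by simp [hc.ne']) hf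
  simp only [smul_eq_mul, ← Finset.mul_sum] at h
  rw [Real.log_mul (by positivity) (Finset.sum_pos hf hs).ne', Real.log_inv] at h
  linarith

theorem convexOn_mul_log_sub_one :
    ConvexOn ℝ (Set.Ici 2) fun x : ℝ ↦ x * Real.log (x - 1) := by
  have hd : ∀ x : ℝ, 1 < x →
      HasDerivAt (fun x : ℝ ↦ x * Real.log (x - 1)) (Real.log (x - 1) + x / (x - 1)) x := by
    intro x hx
    have h := (hasDerivAt_id x).mul (((hasDerivAt_id x).sub_const 1).log (sub_pos.2 hx).ne')
    convert! h using 1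
    simp [div_eq_mul_inv]
  refine MonotoneOn.convexOn_of_deriv (convex_Ici 2)
    (fun x hx ↦ (hd x (by simp at hx; linarith)).continuousAt.continuousWithinAt)
    (fun x hx ↦ (hd x (by simp at hx; linarith)).differentiableAt.differentiableWithinAt) ?_
  intro x hx y hy hxy
  simp only [interior_Ici, mem_Ioi] at hx hy
  rw [(hd x (by linarith)).deriv, (hd y (by linarith)).deriv]
  have hx1 : 0 < x - 1 := by linarith
  have hy1 : 0 < y - 1 := by linarith
  have h := Real.one_sub_inv_le_log_of_pos (div_pos hy1 hx1)
  rw [Real.log_div hy1.ne' hx1.ne', inv_div] at h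
  have h2 : x / (x - 1) - y / (y - 1) ≤ 1 - (x - 1) / (y - 1) := by
    have : 1 - (x - 1) / (y - 1) - (x / (x - 1) - y / (y - 1)) =
        (y - x) * (x - 2) / ((x - 1) * (y - 1)) := by field_simp; ring
    have : 0 ≤ (y - x) * (x - 2) / ((x - 1) * (y - 1)) :=
      div_nonneg (mul_nonneg (by linarith) (by linarith)) (by positivity)
    linarith
  linarith

namespace SimpleGraph

variable {V : Type*} {G : SimpleGraph V} {k : ℕ} [Fintype V] [DecidableRel G.Adj]

theorem CycleSparse.card_pathEnds_pos [DecidableEq V] (hG : G.CycleSparse k)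
    (hdeg : ∀ v, 2 ≤ G.degree v) {j : ℕ} (hj : j + 1 ≤ k) {u x : V} (h : G.Adj u x) :
    0 < (G.pathEnds (j + 1) u x).card := by
  induction j generalizing u x with
  | zero => exact Finset.card_pos.2 ⟨x, mem_pathEnds_one h⟩
  | succ j ih =>
    obtain ⟨y, hy⟩ : ((G.neighborFinset x).erase u).Nonempty := by
      rw [← Finset.card_pos, Finset.card_erase_of_mem (by simpa using h.symm),
        card_neighborFinset_eq_degree]
      have := hdeg x
      lia
    have hxy : G.Adj x y := by simpa using (Finset.mem_erase.1 hy).2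
    exact (ih (by lia) hxy).trans_le
      (Finset.card_le_card (hG.pathEnds_subset hj h (Finset.ne_of_mem_erase hy)))

theorem CycleSparse.sum_log_card_pathEnds (hG : G.CycleSparse k)
    (hdeg : ∀ v, 2 ≤ G.degree v) {j : ℕ} (hj : j + 1 ≤ k) :
    j * ∑ v, G.degree v * Real.log (G.degree v - 1) ≤
      ∑ u, ∑ x ∈ G.neighborFinset u, Real.log (G.pathEnds (j + 1) u x).card := by
  classical
  induction j with
  | zero =>
    simp only [Nat.cast_zero, zero_mul]
    exact Finset.sum_nonneg fun u _ ↦ Finset.sum_nonneg fun x _ ↦ Real.log_natCast_nonneg _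
  | succ j ih =>
    specialize ih (by lia)
    have hsum : ∑ v, G.degree v * Real.log (G.degree v - 1) =
        ∑ u, ∑ x ∈ G.neighborFinset u, Real.log ((G.neighborFinset x).erase u).card := by
      rw [sum_sum_neighborFinset_comm]
      refine Finset.sum_congr rfl fun x _ ↦ ?_
      rw [← card_neighborFinset_eq_degree, ← nsmul_eq_mul, ← Finset.sum_const]
      refine Finset.sum_congr rfl fun u hu ↦ ?_
      rw [Finset.card_erase_of_mem hu, Nat.cast_sub (Finset.card_pos.2 ⟨u, hu⟩), Nat.cast_one]
    rw [← sum_sum_sum_erase_neighborFinset hdeg] at ih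
    calc _ = ∑ v, G.degree v * Real.log (G.degree v - 1) +
          j * ∑ v, G.degree v * Real.log (G.degree v - 1) := by push_cast; ring
      _ ≤ _ := add_le_add hsum.le ih
      _ ≤ _ := by
        rw [← Finset.sum_add_distrib]
        refine Finset.sum_le_sum fun u _ ↦ ?_
        rw [← Finset.sum_add_distrib]
        refine Finset.sum_le_sum fun x hx ↦ ?_
        have hux : G.Adj u x := by simpa using hx
        have hne : ((G.neighborFinset x).erase u).Nonempty := by
          rw [← Finset.card_pos, Finset.card_erase_of_mem (by simpa using hux.symm),
            card_neighborFinset_eq_degree]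
          have := hdeg x
          lia
        have hpos : ∀ y ∈ (G.neighborFinset x).erase u,
            (0 : ℝ) < (G.pathEnds (j + 1) x y).card := fun y hy ↦ by
          have hxy : G.Adj x y := by simpa using (Finset.mem_erase.1 hy).2
          exact_mod_cast hG.card_pathEnds_pos hdeg (by lia) hxy
        refine (log_card_add_le_log_sum hne hpos).trans ?_
        refine Real.log_le_log (Finset.sum_pos hpos hne) ?_
        exact_mod_cast hG.sum_card_pathEnds_le hj hux

/-- A Moore-type bound: in terms of the average degree `d`, it says `d * (d - 1) ^ j ≤ |V|`. -/
theorem CycleSparse.sum_degrees_mul_pow_le [Nonempty V] {j : ℕ} (hG : G.CycleSparse (j + 1))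
    (hdeg : ∀ v, 2 ≤ G.degree v) :
    (∑ v, (G.degree v : ℝ)) * ((∑ v, (G.degree v : ℝ)) / Fintype.card V - 1) ^ j ≤
      (Fintype.card V : ℝ) ^ 2 := by
  classical
  set D : ℝ := ∑ v, (G.degree v : ℝ) with hD
  set n : ℝ := (Fintype.card V : ℝ) with hn
  have hn0 : 0 < n := by simpa [hn] using Fintype.card_pos (α := V)
  have hDn : 2 * n ≤ D := by
    rw [mul_comm, hn, hD, ← nsmul_eq_mul, ← Finset.card_univ]
    exact Finset.card_nsmul_le_sum _ _ _ fun v _ ↦ mod_cast hdeg v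
  have hd1 : 0 < D / n - 1 := by
    have : 2 ≤ D / n := (le_div_iff₀ hn0).2 hDn
    linarith
  have hjensen : D * Real.log (D / n - 1) ≤ ∑ v, G.degree v * Real.log (G.degree v - 1) := by
    have h := convexOn_mul_log_sub_one.map_sum_le (t := (Finset.univ : Finset V))
      (w := fun _ ↦ n⁻¹) (p := fun v ↦ (G.degree v : ℝ)) (fun _ _ ↦ by positivity)
      (by simp [hn]) (fun v _ ↦ by simpa using hdeg v)
    simp only [smul_eq_mul, ← Finset.mul_sum] at h
    rw [← hD, inv_mul_eq_div, inv_mul_eq_div] at h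
    rw [div_mul_eq_mul_div] at h
    exact (div_le_div_iff_of_pos_right hn0).1 h
  let s : Finset (Σ _ : V, V) := Finset.univ.sigma fun u ↦ G.neighborFinset u
  have hcard : (s.card : ℝ) = D := by simp [s, Finset.card_sigma, hD]
  have hsne : s.Nonempty := by
    rw [← Finset.card_pos]
    have : (0 : ℝ) < s.card := by rw [hcard]; linarith
    exact_mod_cast this
  have hpos : ∀ e ∈ s, (0 : ℝ) < (G.pathEnds (j + 1) e.1 e.2).card := fun e he ↦ by
    exact_mod_cast hG.card_pathEnds_pos hdeg le_rfl (by simpa [s] using he)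
  have hlog := log_card_add_le_log_sum hsne hpos
  have hmain := hG.sum_log_card_pathEnds hdeg le_rfl
  have hcount := hG.sum_sum_card_pathEnds_le
  rw [Finset.sum_sigma, Finset.sum_sigma, hcard] at hlog
  have hD0 : 0 < D := by linarith
  have h1 : j * Real.log (D / n - 1) ≤
      D⁻¹ * ∑ u, ∑ x ∈ G.neighborFinset u, Real.log (G.pathEnds (j + 1) u x).card := by
    rw [inv_mul_eq_div, le_div_iff₀ hD0]
    calc _ = j * (D * Real.log (D / n - 1)) := by ring
      _ ≤ _ := mul_le_mul_of_nonneg_left hjensen (Nat.cast_nonneg j)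
      _ ≤ _ := hmain
  have h2 : Real.log (D * (D / n - 1) ^ j) ≤
      Real.log (∑ u, ∑ x ∈ G.neighborFinset u, ((G.pathEnds (j + 1) u x).card : ℝ)) := by
    rw [Real.log_mul hD0.ne' (by positivity), Real.log_pow]
    linarith
  have h3 : (0 : ℝ) < ∑ u, ∑ x ∈ G.neighborFinset u, ((G.pathEnds (j + 1) u x).card : ℝ) := by
    have := Finset.sum_pos hpos hsne
    rwa [Finset.sum_sigma] at this
  refine ((Real.log_le_log_iff (by positivity) h3).1 h2).trans ?_
  rw [hn]
  exact_mod_cast hcount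

end SimpleGraph

theorem le_add_of_mul_sub_one_pow_le {j : ℕ} (hj : 1 ≤ j) {d x : ℝ} (hx : 1 ≤ x)
    (h : d * (d - 1) ^ j ≤ x ^ (j + 1)) : d ≤ x + j / (j + 1) + 2 / x := by
  by_contra! hd
  have hx0 : 0 < x := by linarith
  have hj1 : (1 : ℝ) ≤ j := mod_cast hj
  obtain ⟨y, hy⟩ : ∃ y, y = x⁻¹ := ⟨_, rfl⟩
  obtain ⟨a, ha⟩ : ∃ a : ℝ, a = j / (j + 1) := ⟨_, rfl⟩
  have hxy : x * y = 1 := by rw [hy, mul_inv_cancel₀ hx0.ne']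
  have hy0 : 0 < y := by rw [hy]; positivity
  have hy1 : y ≤ 1 := by rw [hy]; exact inv_le_one_of_one_le₀ hx
  have ha0 : 0 ≤ a := by rw [ha]; positivity
  have ha1 : a ≤ 1 := by rw [ha]; exact div_le_one_of_le₀ (by linarith) (by positivity)
  have haj : j * (1 - a) = a := by rw [ha]; field_simp; ring
  rw [← ha, div_eq_mul_inv, ← hy] at hd
  have hz : 0 < 1 + (-(1 - a) * y + 2 * y ^ 2) := by nlinarith [mul_nonneg ha0 hy0.le]
  have hbern := one_add_mul_le_pow (a := -(1 - a) * y + 2 * y ^ 2) (by linarith) j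
  have hjz : (j : ℝ) * (-(1 - a) * y + 2 * y ^ 2) = -a * y + 2 * j * y ^ 2 := by
    linear_combination -y * haj
  rw [hjz] at hbern
  have h0 : x * (1 + (-(1 - a) * y + 2 * y ^ 2)) = x + a + 2 * y - 1 := by
    linear_combination (-(1 - a) + 2 * y) * hxy
  have h1 : x * (1 + (a * y + 2 * y ^ 2)) = x + a + 2 * y := by
    linear_combination (a + 2 * y) * hxy
  have hprod : 1 ≤ (1 + (a * y + 2 * y ^ 2)) * (1 + (-a * y + 2 * j * y ^ 2)) := by
    have e : (1 + (a * y + 2 * y ^ 2)) * (1 + (-a * y + 2 * j * y ^ 2)) =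
        1 + (2 + 2 * j - a ^ 2) * y ^ 2 + 2 * a * (j - 1) * y ^ 3 + 4 * j * y ^ 4 := by ring
    have h1 : 0 ≤ (2 + 2 * j - a ^ 2) * y ^ 2 := mul_nonneg (by nlinarith) (by positivity)
    have h2 : 0 ≤ 2 * a * (j - 1) * y ^ 3 :=
      mul_nonneg (mul_nonneg (by positivity) (by linarith)) (by positivity)
    have h3 : 0 ≤ 4 * j * y ^ 4 := by positivity
    linarith
  have hlow : x ^ (j + 1) ≤ (x + a + 2 * y) * (x + a + 2 * y - 1) ^ j := by
    rw [← h0, ← h1, mul_pow]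
    calc x ^ (j + 1) = x ^ (j + 1) * 1 := (mul_one _).symm
      _ ≤ x ^ (j + 1) * ((1 + (a * y + 2 * y ^ 2)) * (1 + (-(1 - a) * y + 2 * y ^ 2)) ^ j) := by
        refine mul_le_mul_of_nonneg_left (hprod.trans ?_) (by positivity)
        exact mul_le_mul_of_nonneg_left hbern (by positivity)
      _ = _ := by ring
  have hpos : 0 < x + a + 2 * y - 1 := by rw [← h0]; positivity
  have hup : (x + a + 2 * y) * (x + a + 2 * y - 1) ^ j < d * (d - 1) ^ j :=
    mul_lt_mul hd (pow_le_pow_left₀ hpos.le (by linarith) j) (by positivity) (by linarith)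
  linarith

theorem rpow_one_add_add_le {a x : ℝ} (ha : 0 ≤ a) (hx : 1 ≤ x) :
    x ^ (1 + a) + (1 + a) ≤ (x + 1) ^ (1 + a) := by
  have hx0 : 0 < x := by linarith
  have hb := one_add_mul_self_le_rpow_one_add (s := x⁻¹) (p := 1 + a)
    (by linarith [inv_pos.2 hx0]) (by linarith)
  have e : x + 1 = x * (1 + x⁻¹) := by field_simp
  rw [e, Real.mul_rpow hx0.le (by positivity)]
  have h1 : x ^ (1 + a) = x * x ^ a := by rw [Real.rpow_add hx0, Real.rpow_one]
  have h2 : 1 ≤ x ^ a := Real.one_le_rpow hx ha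
  calc x ^ (1 + a) + (1 + a) ≤ x ^ (1 + a) + (1 + a) * x ^ a := by nlinarith
    _ = x ^ (1 + a) * (1 + (1 + a) * x⁻¹) := by rw [h1]; field_simp
    _ ≤ _ := mul_le_mul_of_nonneg_left hb (by positivity)

/-- The edge bound as a function of the number of vertices `x`. -/
noncomputable def cycleSparseBound (k : ℕ) (x : ℝ) : ℝ :=
  (1 / 2) * x ^ ((1 : ℝ) + 1 / (k : ℝ)) + (((k : ℝ) - 1) / (2 * (k : ℝ))) * x
    + x ^ ((1 : ℝ) - 1 / (k : ℝ))

theorem cycleSparseBound_add_one_le {k : ℕ} (hk : 2 ≤ k) {x : ℝ} (hx : 1 ≤ x) :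
    cycleSparseBound k x + 1 ≤ cycleSparseBound k (x + 1) := by
  have hk0 : (2 : ℝ) ≤ k := mod_cast hk
  have ha : (1 : ℝ) / k ≤ 1 := div_le_one_of_le₀ (by linarith) (by linarith)
  have h1 := rpow_one_add_add_le (a := 1 / (k : ℝ)) (by positivity) hx
  have h2 : x ^ ((1 : ℝ) - 1 / (k : ℝ)) ≤ (x + 1) ^ ((1 : ℝ) - 1 / (k : ℝ)) :=
    Real.rpow_le_rpow (by linarith) (by linarith) (by linarith)
  have h3 : ((k : ℝ) - 1) / (2 * k) = 1 / 2 - 1 / 2 * (1 / k) := by field_simp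
  rw [cycleSparseBound, cycleSparseBound, h3]
  nlinarith

namespace SimpleGraph

theorem CycleSparse.card_edgeFinset_le_of_two_le_degree {V : Type*} [Fintype V] [Nonempty V]
    {G : SimpleGraph V} [DecidableRel G.Adj] {k : ℕ} (hk : 2 ≤ k) (hG : G.CycleSparse k)
    (hdeg : ∀ v, 2 ≤ G.degree v) :
    (G.edgeFinset.card : ℝ) ≤ cycleSparseBound k (Fintype.card V) := by
  obtain ⟨j, rfl⟩ : ∃ j, k = j + 1 := ⟨k - 1, by lia⟩
  have h := hG.sum_degrees_mul_pow_le hdeg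
  have hsum : ∑ v, (G.degree v : ℝ) = 2 * G.edgeFinset.card :=
    mod_cast G.sum_degrees_eq_twice_card_edges
  rw [hsum] at h
  set n : ℝ := (Fintype.card V : ℝ) with hn
  set e : ℝ := (G.edgeFinset.card : ℝ)
  have hn1 : 1 ≤ n := by
    rw [hn]
    exact_mod_cast Fintype.card_pos (α := V)
  have hn0 : 0 < n := by linarith
  obtain ⟨x, hx⟩ : ∃ x, x = n ^ (1 / ((j + 1 : ℕ) : ℝ)) := ⟨_, rfl⟩
  have hx1 : 1 ≤ x := by
    rw [hx]
    exact Real.one_le_rpow hn1 (by positivity)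
  have hxn : x ^ (j + 1) = n := by
    rw [hx, one_div]
    exact Real.rpow_inv_natCast_pow hn0.le (by lia)
  have hd : 2 * e / n * (2 * e / n - 1) ^ j ≤ x ^ (j + 1) := by
    rw [hxn, div_mul_eq_mul_div, div_le_iff₀ hn0, ← sq]
    exact h
  have hb := le_add_of_mul_sub_one_pow_le (by lia) hx1 hd
  rw [div_le_iff₀ hn0] at hb
  rw [cycleSparseBound, Real.rpow_add hn0, Real.rpow_sub hn0, Real.rpow_one, ← hx]
  have e1 : (((j + 1 : ℕ) : ℝ) - 1) / (2 * ((j + 1 : ℕ) : ℝ)) = (j / (j + 1) : ℝ) / 2 := by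
    push_cast
    field_simp
    ring
  have e2 : n / x = 2 / x * n / 2 := by ring
  rw [e1, e2]
  linarith

theorem CycleSparse.card_edgeFinset_le {V : Type*} [Fintype V] [Nonempty V]
    {G : SimpleGraph V} [DecidableRel G.Adj] {k : ℕ} (hk : 2 ≤ k) (hG : G.CycleSparse k) :
    (G.edgeFinset.card : ℝ) ≤ cycleSparseBound k (Fintype.card V) := by
  classical
  induction hc : Fintype.card V using Nat.strongRec generalizing V with | ind n ih =>
  rw [← hc]
  by_cases! hdeg : ∀ v, 2 ≤ G.degree v
  · exact hG.card_edgeFinset_le_of_two_le_degree hk hdeg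
  obtain ⟨v, hv⟩ := hdeg
  rcases subsingleton_or_nontrivial V with hV | hV
  · have h0 : G.edgeFinset.card = 0 := by
      rw [Finset.card_eq_zero, edgeFinset_eq_empty]
      exact Subsingleton.elim _ _
    have hk0 : (2 : ℝ) ≤ k := mod_cast hk
    rw [h0, cycleSparseBound, Nat.cast_zero]
    have : (0 : ℝ) ≤ (k - 1) / (2 * k) := div_nonneg (by linarith) (by linarith)
    positivity
  obtain ⟨w, hw⟩ := exists_ne v
  have : Nonempty ({v}ᶜ : Set V) := ⟨⟨w, hw⟩⟩
  have hcard : Fintype.card ({v}ᶜ : Set V) + 1 = Fintype.card V := by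
    rw [Fintype.card_compl_set, Set.card_singleton]
    have := Fintype.card_pos (α := V)
    lia
  have hle := ih _ (by lia) (hG.induce {v}ᶜ) rfl
  rw [card_edgeFinset_induce_compl_singleton, card_edgeFinset_deleteIncidenceSet] at hle
  have h1 : (G.edgeFinset.card : ℝ) ≤ ((G.edgeFinset.card - G.degree v : ℕ) : ℝ) + 1 := by
    norm_cast
    lia
  have h2 := cycleSparseBound_add_one_le hk (x := Fintype.card ({v}ᶜ : Set V))
    (mod_cast Fintype.card_pos)
  rw [← hcard]
  push_cast
  linarith

end SimpleGraph

/-- Let `k ≥ 2` and `n ≥ 1`, and let `G` be a graph on `n` vertices containing no cycle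
of length at most `k` and no even cycle of length at most `2k`.  Then
`e(G) ≤ (1/2) n^(1 + 1/k) + ((k - 1)/(2k)) n + n^(1 - 1/k)`. -/
theorem turan_bound_cycles (k n : ℕ) (hk : 2 ≤ k) (hn : 1 ≤ n)
    (G : SimpleGraph (Fin n))
    (hshort : ¬ ∃ (v : Fin n) (c : G.Walk v v), c.IsCycle ∧ c.length ≤ k)
    (heven : ¬ ∃ (v : Fin n) (c : G.Walk v v), c.IsCycle ∧ Even c.length ∧
      c.length ≤ 2 * k) :
    (G.edgeSet.ncard : ℝ) ≤
      (1 / 2) * (n : ℝ) ^ ((1 : ℝ) + 1 / (k : ℝ))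
        + (((k : ℝ) - 1) / (2 * (k : ℝ))) * (n : ℝ)
        + (n : ℝ) ^ ((1 : ℝ) - 1 / (k : ℝ)) := by
  classical
  have : Nonempty (Fin n) := ⟨⟨0, hn⟩⟩
  have hG : G.CycleSparse k := fun v c hc ↦
    ⟨not_le.1 fun h ↦ hshort ⟨v, c, hc, h⟩, fun he ↦ not_le.1 fun h ↦ heven ⟨v, c, hc, he, h⟩⟩
  have h := hG.card_edgeFinset_le hk
  rwa [Fintype.card_fin, ← Set.ncard_coe_finset, SimpleGraph.coe_edgeFinset] at h
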